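/- arXiv:1601.01205 — 4 statements merged into one kernel-verified Lean document; each statement's English description precedes it below -/
import Mathlib

section
/- Let X be a spectral space and dim a spectral dimension function on X. Then for every ordinal α the subset X_{>α} = {x ∈ X : dim x > α}, equipped with the subspace topology, is proconstructible and hence a spectral subspace of X. -/
open TopologicalSpace Set

universe u

/-- A topological space is *spectral* if it is quasi-compact, `T0`, has a basis of quasi-compact
open subsets closed under finite intersections, and every nonempty irreducible closed subset
has a (necessarily unique) generic point. -/
structure IsSpectralSpace (X : Type*) [TopologicalSpace X] : Prop where
  compactSpace : CompactSpace X
  t0Space : T0Space X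
  basis : ∃ B : Set (Set X), (∀ U ∈ B, IsOpen U ∧ IsCompact U) ∧
    Set.univ ∈ B ∧ (∀ U ∈ B, ∀ V ∈ B, U ∩ V ∈ B) ∧ TopologicalSpace.IsTopologicalBasis B
  quasiSober : QuasiSober X

/-- The constructible topology: generated by the quasi-compact opens and their complements. -/
def constructibleTop (X : Type*) [TopologicalSpace X] : TopologicalSpace X :=
  TopologicalSpace.generateFrom
    ({U : Set X | IsOpen U ∧ IsCompact U} ∪ {U : Set X | IsOpen Uᶜ ∧ IsCompact Uᶜ})

/-- A subset is Thomason if it is a union of closed subsets with quasi-compact open complement. -/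
def IsThomason {X : Type*} [TopologicalSpace X] (V : Set X) : Prop :=
  ∃ S : Set (Set X), (∀ C ∈ S, IsClosed C ∧ IsOpen Cᶜ ∧ IsCompact Cᶜ) ∧ V = ⋃₀ S

/-- A point is visible if `{x} = V \ (V ∩ W)` for Thomason subsets `V`, `W`. -/
def IsVisiblePoint {X : Type*} [TopologicalSpace X] (x : X) : Prop :=
  ∃ V W : Set X, IsThomason V ∧ IsThomason W ∧ ({x} : Set X) = V \ (V ∩ W)

/-- A dimension function on a topological space. -/
structure IsDimensionFunction {X : Type u} [TopologicalSpace X] (d : X → Ordinal.{u}) : Prop where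
  not_isLimit : ∀ x, ¬ Order.IsSuccLimit (d x)
  le_of_mem_closure : ∀ x y, y ∈ closure ({x} : Set X) → d y ≤ d x
  eq_of_mem_closure : ∀ x y, y ∈ closure ({x} : Set X) → d y = d x → x = y

/-- A spectral dimension function: all sublevel sets are Thomason. -/
def IsSpectralDimensionFunction {X : Type u} [TopologicalSpace X] (d : X → Ordinal.{u}) : Prop :=
  IsDimensionFunction d ∧ ∀ α : Ordinal.{u}, IsThomason {x : X | d x ≤ α}

/-- The Krull filtration `X_{≤α}`. -/
noncomputable def krullSet (X : Type u) [TopologicalSpace X] (α : Ordinal.{u}) : Set X :=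
  Ordinal.limitRecOn α
    {x : X | IsClosed ({x} : Set X)}
    (fun _ S => S ∪ {x : X | x ∈ Sᶜ ∧ IsClosed {y : (Sᶜ : Set X) | (y : X) = x}})
    (fun o _ ih => ⋃ κ : Set.Iio o, ih κ.1 κ.2)

/-- The (transfinite) Krull dimension of a point. -/
noncomputable def kdim (X : Type u) [TopologicalSpace X] (x : X) : Ordinal.{u} :=
  sInf {α : Ordinal.{u} | x ∈ krullSet X α}

/-- The Cantor–Bendixson filtration `X_{≤α}`. -/
noncomputable def cbSet (X : Type u) [TopologicalSpace X] (α : Ordinal.{u}) : Set X :=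
  Ordinal.limitRecOn α
    {x : X | IsOpen ({x} : Set X)}
    (fun _ S => S ∪ {x : X | x ∈ Sᶜ ∧ IsOpen {y : (Sᶜ : Set X) | (y : X) = x}})
    (fun o _ ih => ⋃ κ : Set.Iio o, ih κ.1 κ.2)

/-- `X` has Cantor–Bendixson rank if the filtration exhausts `X`. -/
def HasCantorBendixsonRank (X : Type u) [TopologicalSpace X] : Prop :=
  ∃ β : Ordinal.{u}, cbSet X β = Set.univ

/-- The Cantor–Bendixson rank of a point. -/
noncomputable def cbRank (X : Type u) [TopologicalSpace X] (x : X) : Ordinal.{u} :=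
  sInf {α : Ordinal.{u} | x ∈ cbSet X α}

/-!
The complement of a Thomason set is closed in the constructible topology. Since the constructible
topology of a spectral space is compact, the intersection of a proconstructible set `s` with a
compact open set is compact, so the inclusion of `s` is spectral. Sobriety of `s` rests on the same
compactness: if every compact open neighbourhood of `x` meets `s`, then a single point of `s` lies
in all of them, so every point of the closure of `s` is a specialization of a point of `s`.
-/

open Topology

lemma isSpectralSpace_iff_spectralSpace {X : Type*} [TopologicalSpace X] :
    IsSpectralSpace X ↔ SpectralSpace X := by
  constructor
  · rintro ⟨_, _, ⟨B, hB, -, hB_inter, hB_basis⟩, _⟩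
    have : PrespectralSpace X := .of_isTopologicalBasis hB_basis fun U hU ↦ (hB U hU).2
    have : QuasiSeparatedSpace X :=
      .of_isTopologicalBasis (b := ((↑) : B → Set X)) (by rwa [Subtype.range_coe])
        fun U V ↦ (hB _ (hB_inter _ U.2 _ V.2)).2
    constructor
  · intro _
    exact ⟨inferInstance, inferInstance,
      ⟨{U | IsOpen U ∧ IsCompact U}, fun _ hU ↦ hU, ⟨isOpen_univ, isCompact_univ⟩,
        fun _ hU _ hV ↦ ⟨hU.1.inter hV.1, hU.2.inter_of_isOpen hV.2 hU.1 hV.1⟩,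
        PrespectralSpace.isTopologicalBasis⟩,
      inferInstance⟩

lemma constructibleTop_eq_constructibleTopology (X : Type*) [TopologicalSpace X] :
    constructibleTop X = constructibleTopology X := by
  simp only [constructibleTop, constructibleTopology, constructibleTopologySubbasis,
    isOpen_compl_iff]

lemma IsThomason.isOpen_constructibleTop {X : Type*} [TopologicalSpace X] {V : Set X}
    (hV : IsThomason V) : IsOpen[constructibleTop X] V := by
  obtain ⟨S, hS, rfl⟩ := hV
  exact @isOpen_sUnion X (constructibleTop X) S fun C hC ↦
    isOpen_generateFrom_of_mem (.inr (hS C hC).2)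

lemma quasiSeparatedSpace_of_isInducing {X Y : Type*} [TopologicalSpace X] [TopologicalSpace Y]
    [PrespectralSpace Y] [QuasiSeparatedSpace Y] {f : X → Y} (hf : IsInducing f)
    (hf' : IsSpectralMap f) : QuasiSeparatedSpace X := by
  let b : {U : Set Y | IsOpen U ∧ IsCompact U} → Set X := fun U ↦ f ⁻¹' U
  have hb : IsTopologicalBasis (range b) := by
    simpa only [b, image_eq_range] using PrespectralSpace.isTopologicalBasis.isInducing hf
  refine .of_isTopologicalBasis hb fun ⟨U, hU, hU'⟩ ⟨V, hV, hV'⟩ ↦ ?_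
  exact hf'.isCompact_preimage_of_isOpen (hU.inter hV) (hU'.inter_of_isOpen hV' hU hV)

section ConstructibleTopology

variable {X : Type*} [TopologicalSpace X]

lemma isClosed_constructibleTopology_of_isCompact_of_isOpen {U : Set X} (hU : IsCompact U)
    (hU' : IsOpen U) : IsClosed[constructibleTopology X] U :=
  @IsClosed.mk X (constructibleTopology X) U <|
    IsCompact.isOpen_constructibleTopology_of_isClosed (by rwa [compl_compl]) hU'.isClosed_compl

lemma constructibleTopology_le [PrespectralSpace X] :
    constructibleTopology X ≤ ‹TopologicalSpace X› :=
  (le_generateFrom fun _ hU ↦ hU.2.isOpen_constructibleTopology_of_isOpen hU.1).trans_eq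
    PrespectralSpace.isTopologicalBasis.eq_generateFrom.symm

variable [CompactSpace X] [QuasiSober X] [PrespectralSpace X] [QuasiSeparatedSpace X] {s : Set X}

lemma isCompact_constructibleTopology_of_isClosed (hs : IsClosed[constructibleTopology X] s) :
    @IsCompact X (constructibleTopology X) s := by
  have : @CompactSpace X (constructibleTopology X) :=
    @Function.Surjective.compactSpace _ _ _ (constructibleTopology X) _
      (WithTopology.continuous_ofTopology _) inferInstance (WithTopology.ofTopology_surjective _)
  exact @IsClosed.isCompact X (constructibleTopology X) s this hs

lemma isCompact_of_isClosed_constructibleTopology (hs : IsClosed[constructibleTopology X] s) :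
    IsCompact s := by
  simpa only [image_id] using
    @IsCompact.image X X (constructibleTopology X) _ s id
      (isCompact_constructibleTopology_of_isClosed hs)
      (continuous_id_of_le constructibleTopology_le)

lemma exists_specializes_of_mem_closure (hs : IsClosed[constructibleTopology X] s) {x : X}
    (hx : x ∈ closure s) : ∃ y ∈ s, y ⤳ x := by
  let 𝒰 := {U : Set X | (IsOpen U ∧ IsCompact U) ∧ x ∈ U}
  have h_finite (F : Finset 𝒰) : (s ∩ ⋂ U ∈ F, (U : Set X)).Nonempty := by
    rw [inter_comm]
    exact mem_closure_iff.mp hx _ (isOpen_biInter_finset fun U _ ↦ U.2.1.1)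
      (mem_iInter₂.mpr fun U _ ↦ U.2.2)
  obtain ⟨y, hys, hy⟩ := @IsCompact.inter_iInter_nonempty X (constructibleTopology X) s 𝒰
    (isCompact_constructibleTopology_of_isClosed hs) (↑)
    (fun U ↦ isClosed_constructibleTopology_of_isCompact_of_isOpen U.2.1.2 U.2.1.1) h_finite
  refine ⟨y, hys, specializes_iff_forall_open.mpr fun W hW hxW ↦ ?_⟩
  obtain ⟨U, hU, hxU, hUW⟩ := PrespectralSpace.isTopologicalBasis.exists_subset_of_mem_open hxW hW
  exact hUW (mem_iInter.mp hy ⟨U, hU, hxU⟩)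

lemma quasiSober_of_isClosed_constructibleTopology (hs : IsClosed[constructibleTopology X] s) :
    QuasiSober s where
  sober {Z} hZ hZ' := by
    let T : Set X := (↑) '' Z
    have hT_eq : T = s ∩ closure T := by
      rw [← Subtype.image_preimage_coe, ← IsInducing.subtypeVal.closure_eq_preimage_closure_image,
        hZ'.closure_eq]
    have hT_closed : IsClosed[constructibleTopology X] T := by
      rw [hT_eq]
      exact @IsClosed.inter X _ _ (constructibleTopology X) hs
        (isClosed_closure.mono constructibleTopology_le)
    obtain ⟨x, hx⟩ := QuasiSober.sober
      (hZ.image _ continuous_subtype_val.continuousOn).closure isClosed_closure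
    -- `x` may lie outside `s`, but some point of `T` specializes to it and is then generic in `Z`.
    obtain ⟨_, ⟨z, hz, rfl⟩, hzx⟩ := exists_specializes_of_mem_closure hT_closed hx.mem
    refine ⟨z, isGenericPoint_iff_specializes.mpr fun w ↦
      ⟨fun hzw ↦ hzw.mem_closed hZ' hz, fun hw ↦ IsInducing.subtypeVal.specializes_iff.mp ?_⟩⟩
    exact hzx.trans (hx.specializes (subset_closure (mem_image_of_mem _ hw)))

lemma isSpectralMap_subtypeVal_of_isClosed_constructibleTopology
    (hs : IsClosed[constructibleTopology X] s) : IsSpectralMap ((↑) : s → X) where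
  toContinuous := continuous_subtype_val
  isCompact_preimage_of_isOpen U hU hU' := by
    rw [Subtype.isCompact_iff, Subtype.image_preimage_coe]
    exact isCompact_of_isClosed_constructibleTopology <|
      @IsClosed.inter X _ _ (constructibleTopology X) hs
        (isClosed_constructibleTopology_of_isCompact_of_isOpen hU' hU)

end ConstructibleTopology

lemma spectralSpace_of_isClosed_constructibleTopology {X : Type*} [TopologicalSpace X]
    [SpectralSpace X] {s : Set X} (hs : IsClosed[constructibleTopology X] s) : SpectralSpace s :=
  have hs' := isSpectralMap_subtypeVal_of_isClosed_constructibleTopology hs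
  { toT0Space := inferInstance
    toCompactSpace := isCompact_iff_compactSpace.mp (isCompact_of_isClosed_constructibleTopology hs)
    toQuasiSober := quasiSober_of_isClosed_constructibleTopology hs
    toQuasiSeparatedSpace := quasiSeparatedSpace_of_isInducing IsInducing.subtypeVal hs'
    toPrespectralSpace := .of_isInducing _ IsInducing.subtypeVal hs' }

theorem statement7_general {X : Type*} [TopologicalSpace X] (hX : IsSpectralSpace X) {V : Set X}
    (hV : IsThomason V) :
    IsClosed[constructibleTop X] Vᶜ ∧ IsSpectralSpace ↥Vᶜ ∧ IsSpectralMap ((↑) : ↥Vᶜ → X) := by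
  have := isSpectralSpace_iff_spectralSpace.mp hX
  have h_closed : IsClosed[constructibleTop X] Vᶜ :=
    (@isClosed_compl_iff X (constructibleTop X) V).mpr hV.isOpen_constructibleTop
  have h_closed' : IsClosed[constructibleTopology X] Vᶜ :=
    constructibleTop_eq_constructibleTopology X ▸ h_closed
  have : SpectralSpace ↥Vᶜ := spectralSpace_of_isClosed_constructibleTopology h_closed'
  exact ⟨h_closed, isSpectralSpace_iff_spectralSpace.mpr this,
    isSpectralMap_subtypeVal_of_isClosed_constructibleTopology h_closed'⟩

theorem statement7 {X : Type u} [TopologicalSpace X] (hX : IsSpectralSpace X)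
    (d : X → Ordinal.{u}) (hd : IsSpectralDimensionFunction d) (α : Ordinal.{u}) :
    @IsClosed X (constructibleTop X) {x : X | α < d x} ∧
      IsSpectralSpace {x : X | α < d x} ∧
      IsSpectralMap ((↑) : {x : X | α < d x} → X) := by
  have h_compl : {x : X | α < d x} = {x : X | d x ≤ α}ᶜ := by simp only [compl_ofPred, not_le]
  exact h_compl ▸ statement7_general hX (hd.2 α)
end

section
/- Let X be a noetherian spectral space. Then for every ordinal α the subset X_{≤α} = {x : kdim_X x ≤ α} defined by the Krull dimension function is specialisation closed, and hence Thomason; consequently kdim_X is a spectral dimension function on X. -/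
open TopologicalSpace Set

universe u

/-!
A point outside `krullSet X α` is closed in the complement of `krullSet X α` exactly when all of
its proper specialisations lie in `krullSet X α`. When the filtration exhausts `X`, a value of
`kdim` is never a limit ordinal, since stages at limits add no points; so a non-closed point
enters at some stage `α + 1`, with its proper specialisations already in stage `α`, and `kdim`
strictly decreases along proper specialisations. Exhaustion holds in a `T0` noetherian space
because proper specialisation is well-founded there. Finally, on a noetherian space every
dimension function is spectral: all open subsets are quasi-compact, so Thomason means
specialisation closed.
-/

section Thomason

variable {X : Type u} [TopologicalSpace X]

theorem isThomason_iff_stableUnderSpecialization [NoetherianSpace X] {V : Set X} :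
    IsThomason V ↔ StableUnderSpecialization V := by
  have hC (C : Set X) : (IsClosed C ∧ IsOpen Cᶜ ∧ IsCompact Cᶜ) ↔ IsClosed C :=
    ⟨And.left, fun h ↦ ⟨h, h.isOpen_compl, NoetherianSpace.isCompact _⟩⟩
  simp only [IsThomason, hC, stableUnderSpecialization_iff_exists_sUnion_eq, eq_comm]

theorem IsDimensionFunction.stableUnderSpecialization_setOf_le {d : X → Ordinal.{u}}
    (hd : IsDimensionFunction d) (α : Ordinal.{u}) :
    StableUnderSpecialization {x | d x ≤ α} :=
  fun x y hxy hx ↦ (hd.le_of_mem_closure x y hxy.mem_closure).trans hx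

theorem IsDimensionFunction.isSpectralDimensionFunction [NoetherianSpace X]
    {d : X → Ordinal.{u}} (hd : IsDimensionFunction d) : IsSpectralDimensionFunction d :=
  ⟨hd, fun α ↦ isThomason_iff_stableUnderSpecialization.2
    (hd.stableUnderSpecialization_setOf_le α)⟩

end Thomason

section Specialization

variable {X : Type*} [TopologicalSpace X]

theorem isClosed_singleton_iff_forall_specializes {x : X} :
    IsClosed ({x} : Set X) ↔ ∀ y, x ⤳ y → y = x := by
  simp only [← closure_subset_iff_isClosed, subset_def, mem_singleton_iff,
    ← specializes_iff_mem_closure]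

theorem wellFounded_specializes_and_ne [T0Space X] [NoetherianSpace X] :
    WellFounded fun y x : X ↦ x ⤳ y ∧ y ≠ x := by
  refine Subrelation.wf ?_ (InvImage.wf (fun x : X ↦ Closeds.closure {x}) wellFounded_lt)
  rintro y x ⟨hxy, hne⟩
  refine lt_of_le_not_ge hxy.closure_subset fun hyx ↦ hne ?_
  exact ((specializes_iff_closure_subset.2 hyx).antisymm hxy).eq

end Specialization

section KrullFiltration

variable {X : Type u} [TopologicalSpace X] {x : X} {α : Ordinal.{u}}

theorem krullSet_zero : krullSet X 0 = {x : X | IsClosed ({x} : Set X)} :=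
  Ordinal.limitRecOn_zero ..

theorem krullSet_add_one (α : Ordinal.{u}) :
    krullSet X (α + 1) = krullSet X α ∪
      {x | x ∈ (krullSet X α)ᶜ ∧ IsClosed {y : ((krullSet X α)ᶜ : Set X) | (y : X) = x}} :=
  Ordinal.limitRecOn_add_one ..

theorem krullSet_of_isSuccLimit (hα : Order.IsSuccLimit α) :
    krullSet X α = ⋃ κ : Iio α, krullSet X κ :=
  Ordinal.limitRecOn_limit _ _ _ _ hα

theorem mem_krullSet_zero_iff : x ∈ krullSet X 0 ↔ ∀ y, x ⤳ y → y = x := by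
  rw [krullSet_zero, mem_ofPred_eq, isClosed_singleton_iff_forall_specializes]

theorem mem_krullSet_add_one_iff :
    x ∈ krullSet X (α + 1) ↔ x ∈ krullSet X α ∨ ∀ y, x ⤳ y → y ≠ x → y ∈ krullSet X α := by
  rw [krullSet_add_one, mem_union, mem_ofPred_eq]
  by_cases hx : x ∈ krullSet X α
  · simp only [hx, true_or]
  have hsing : {y : ((krullSet X α)ᶜ : Set X) | (y : X) = x} = {⟨x, hx⟩} := by
    ext y
    simp only [mem_ofPred_eq, mem_singleton_iff, Subtype.ext_iff]
  simp only [hsing, isClosed_singleton_iff_forall_specializes, subtype_specializes_iff,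
    Subtype.forall, Subtype.mk.injEq, mem_compl_iff, hx, not_false_eq_true, true_and, false_or]
  exact forall_congr' fun y ↦ by tauto

theorem monotone_krullSet : Monotone (krullSet X) := by
  intro α β hαβ
  induction β using Ordinal.limitRecOn with
  | zero => rw [nonpos_iff_eq_zero.1 hαβ]
  | add_one β ih =>
    rcases hαβ.eq_or_lt with rfl | hlt
    · rfl
    · exact (ih (Order.lt_add_one_iff.1 hlt)).trans fun x hx ↦ mem_krullSet_add_one_iff.2 (.inl hx)
  | limit β hβ _ =>
    rcases hαβ.eq_or_lt with rfl | hlt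
    · rfl
    · rw [krullSet_of_isSuccLimit hβ]
      exact subset_iUnion (fun κ : Iio β ↦ krullSet X κ) ⟨α, hlt⟩

end KrullFiltration

/-- The Krull filtration exhausts `X`. On the points outside its union, `kdim` takes the junk
value `sInf ∅ = 0`. -/
def HasKrullDimension (X : Type u) [TopologicalSpace X] : Prop :=
  ∀ x : X, ∃ α : Ordinal.{u}, x ∈ krullSet X α

theorem hasKrullDimension_of_wellFounded {X : Type u} [TopologicalSpace X]
    (wf : WellFounded fun y x : X ↦ x ⤳ y ∧ y ≠ x) : HasKrullDimension X := by
  intro x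
  induction x using wf.induction with
  | _ x ih =>
    choose f hf using ih
    let β : Ordinal.{u} := ⨆ y : {y // x ⤳ y ∧ y ≠ x}, f y y.2
    refine ⟨β + 1, mem_krullSet_add_one_iff.2 (.inr fun y hxy hne ↦ ?_)⟩
    have hle : f y ⟨hxy, hne⟩ ≤ β :=
      Ordinal.le_iSup (fun y : {y // x ⤳ y ∧ y ≠ x} ↦ f y y.2) ⟨y, hxy, hne⟩
    exact monotone_krullSet hle (hf y ⟨hxy, hne⟩)

namespace HasKrullDimension

variable {X : Type u} [TopologicalSpace X]

theorem kdim_le_iff (hX : HasKrullDimension X) {x : X} {α : Ordinal.{u}} :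
    kdim X x ≤ α ↔ x ∈ krullSet X α :=
  ⟨fun h ↦ monotone_krullSet h (csInf_mem (hX x)), fun h ↦ csInf_le' h⟩

theorem not_isSuccLimit_kdim (hX : HasKrullDimension X) (x : X) :
    ¬ Order.IsSuccLimit (kdim X x) := by
  intro hlim
  have hx : x ∈ krullSet X (kdim X x) := hX.kdim_le_iff.1 le_rfl
  rw [krullSet_of_isSuccLimit hlim, mem_iUnion] at hx
  obtain ⟨⟨κ, hκ⟩, hxκ⟩ := hx
  exact (hX.kdim_le_iff.2 hxκ).not_gt hκ

theorem kdim_lt_of_specializes (hX : HasKrullDimension X) {x y : X} (hxy : x ⤳ y) (hne : y ≠ x) :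
    kdim X y < kdim X x := by
  have hx : x ∈ krullSet X (kdim X x) := hX.kdim_le_iff.1 le_rfl
  rcases Ordinal.zero_or_succ_or_isSuccLimit (kdim X x) with hzero | ⟨α, hα⟩ | hlim
  · rw [hzero] at hx
    exact absurd (mem_krullSet_zero_iff.1 hx y hxy) hne
  · have hαx : α < kdim X x := hα ▸ Order.lt_succ α
    have hxα : x ∉ krullSet X α := fun h ↦ (hX.kdim_le_iff.2 h).not_gt hαx
    rw [← hα, Order.succ_eq_add_one] at hx
    have hyα : y ∈ krullSet X α := (mem_krullSet_add_one_iff.1 hx).resolve_left hxα y hxy hne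
    exact (hX.kdim_le_iff.2 hyα).trans_lt hαx
  · exact absurd hlim (hX.not_isSuccLimit_kdim x)

theorem isDimensionFunction_kdim (hX : HasKrullDimension X) : IsDimensionFunction (kdim X) where
  not_isLimit := hX.not_isSuccLimit_kdim
  le_of_mem_closure x y hy := by
    rcases eq_or_ne y x with rfl | hne
    · rfl
    · exact (hX.kdim_lt_of_specializes (specializes_iff_mem_closure.2 hy) hne).le
  eq_of_mem_closure x y hy hxy := by
    by_contra! hne
    exact (hX.kdim_lt_of_specializes (specializes_iff_mem_closure.2 hy) hne.symm).ne hxy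

end HasKrullDimension

theorem statement10_general {X : Type u} [TopologicalSpace X] [T0Space X] [NoetherianSpace X] :
    (∀ α : Ordinal.{u}, (∀ x ∈ {y : X | kdim X y ≤ α}, closure {x} ⊆ {y : X | kdim X y ≤ α}) ∧
        IsThomason {y : X | kdim X y ≤ α}) ∧
      IsSpectralDimensionFunction (kdim X) := by
  have hX : HasKrullDimension X := hasKrullDimension_of_wellFounded wellFounded_specializes_and_ne
  have hd : IsDimensionFunction (kdim X) := hX.isDimensionFunction_kdim
  have hs : IsSpectralDimensionFunction (kdim X) := hd.isSpectralDimensionFunction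
  refine ⟨fun α ↦ ⟨fun x hx y hy ↦ ?_, hs.2 α⟩, hs⟩
  exact hd.stableUnderSpecialization_setOf_le α (specializes_iff_mem_closure.2 hy) hx

theorem statement10 {X : Type u} [TopologicalSpace X] (hX : IsSpectralSpace X)
    [TopologicalSpace.NoetherianSpace X] :
    (∀ α : Ordinal.{u}, (∀ x ∈ {y : X | kdim X y ≤ α}, closure {x} ⊆ {y : X | kdim X y ≤ α}) ∧
        IsThomason {y : X | kdim X y ≤ α}) ∧
      IsSpectralDimensionFunction (kdim X) := by
  have := hX.t0Space
  exact statement10_general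
end

section
/- Let X be a topological space and Y a subspace of X, with Cantor–Bendixson filtrations X_{≤α} ⊆ X and Y_{≤α} ⊆ Y and complements X_{>α}, Y_{>α}. Then for every ordinal α there exists an ordinal α' ≥ α such that Y_{>α} ⊆ X_{>α'}. -/
/-!
Passing from `X_{>α}` to `X_{>α+1}` discards the isolated points, so `X_{>α}` is the transfinite
iterate of the relative derived set `A ↦ A ∩ A'`. A continuous injection carries accumulation
points of `A` to accumulation points of any set containing the image of `A`; iterating, it maps
`Y_{>α}` into `X_{>α}`, so that `α' = α` works for the inclusion of a subspace.
-/

open TopologicalSpace Set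

universe u

theorem isOpen_singleton_iff_notMem_derivedSet_univ {X : Type*} [TopologicalSpace X] {x : X} :
    IsOpen {x} ↔ x ∉ derivedSet univ := by
  rw [isOpen_singleton_iff_punctured_nhds, mem_derivedSet, AccPt, Filter.principal_univ,
    inf_top_eq, Filter.not_neBot]

theorem isOpen_subtype_coe_eq_iff_notMem_derivedSet {X : Type*} [TopologicalSpace X] {S : Set X}
    {x : X} (hx : x ∈ S) : IsOpen {y : S | (y : X) = x} ↔ x ∉ derivedSet S := by
  have coe_eq : {y : S | (y : X) = x} = {⟨x, hx⟩} := by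
    ext y
    simp only [mem_ofPred_eq, mem_singleton_iff, Subtype.ext_iff]
  rw [coe_eq, isOpen_singleton_iff_punctured_nhds, nhds_ne_subtype_eq_bot_iff, mem_derivedSet,
    AccPt, Filter.not_neBot]

theorem mapsTo_relDerivedSet {X Y : Type*} [TopologicalSpace X] [TopologicalSpace Y]
    {f : Y → X} (hf : Continuous f) (hinj : Function.Injective f) {A : Set Y} {B : Set X}
    (hAB : MapsTo f A B) : MapsTo f (relDerivedSet A) (relDerivedSet B) := fun _ hy =>
  ⟨derivedSet_mono _ _ hAB.image_subset (hf.image_derivedSet hinj (mem_image_of_mem f hy.1)),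
    hAB hy.2⟩

section CantorBendixson

variable {X : Type u} [TopologicalSpace X]

theorem compl_cbSet_zero : (cbSet X 0)ᶜ = relDerivedSet univ := by
  have cbSet_zero : cbSet X 0 = {x | IsOpen {x}} := Ordinal.limitRecOn_zero ..
  ext x
  rw [cbSet_zero, relDerivedSet_apply, inter_univ, mem_compl_iff, mem_ofPred_eq,
    isOpen_singleton_iff_notMem_derivedSet_univ, not_not]

theorem compl_cbSet_add_one (α : Ordinal.{u}) :
    (cbSet X (α + 1))ᶜ = relDerivedSet (cbSet X α)ᶜ := by
  have cbSet_add_one : cbSet X (α + 1) = cbSet X α ∪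
      {x | x ∈ (cbSet X α)ᶜ ∧ IsOpen {y : ((cbSet X α)ᶜ : Set X) | (y : X) = x}} :=
    Ordinal.limitRecOn_add_one ..
  ext x
  rw [cbSet_add_one, relDerivedSet_apply, compl_union, inter_comm]
  refine and_congr_left fun hx => ?_
  rw [mem_compl_iff, mem_ofPred_eq, and_iff_right hx,
    isOpen_subtype_coe_eq_iff_notMem_derivedSet hx, not_not]

theorem compl_cbSet_of_isSuccLimit {o : Ordinal.{u}} (ho : Order.IsSuccLimit o) :
    (cbSet X o)ᶜ = ⋂ κ : Iio o, (cbSet X κ)ᶜ := by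
  rw [← compl_iUnion]
  exact congrArg compl (Ordinal.limitRecOn_limit _ _ _ _ ho)

theorem statement14_general {Y : Type u} [TopologicalSpace Y] {f : Y → X} (hf : Continuous f)
    (hinj : Function.Injective f) (α : Ordinal.{u}) :
    MapsTo f (cbSet Y α)ᶜ (cbSet X α)ᶜ := by
  induction α using Ordinal.limitRecOn with
  | zero =>
    simpa only [compl_cbSet_zero] using mapsTo_relDerivedSet hf hinj (mapsTo_univ f univ)
  | add_one α ih =>
    simpa only [compl_cbSet_add_one] using mapsTo_relDerivedSet hf hinj ih
  | limit o ho ih =>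
    simpa only [compl_cbSet_of_isSuccLimit ho] using
      mapsTo_iInter_iInter fun κ : Iio o => ih κ κ.2

end CantorBendixson

theorem statement14 {X : Type u} [TopologicalSpace X] (Y : Set X) (α : Ordinal.{u}) :
    ∃ α' : Ordinal.{u}, α ≤ α' ∧ ∀ y : Y, y ∉ cbSet (↥Y) α → (y : X) ∉ cbSet X α' :=
  ⟨α, le_rfl, statement14_general continuous_subtype_val Subtype.val_injective α⟩
end

section
/- Let R be a semi-artinian absolutely flat (von Neumann regular) commutative ring. Then the local-to-global principle holds for D(R): for every object A of D(R), A lies in the smallest localizing subcategory of D(R) containing the objects R_P ⊗_R A for all prime ideals P of R (here R_P is flat, so R_P ⊗_R A computes the derived tensor product). -/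
open CategoryTheory CategoryTheory.Limits CategoryTheory.Pretriangulated CategoryTheory.MonoidalCategory

universe w v u

/-- A commutative ring is absolutely flat (von Neumann regular) if every element `r`
satisfies `r = r ^ 2 * x` for some `x`. -/
def IsAbsolutelyFlat (R : Type u) [CommRing R] : Prop :=
  ∀ r : R, ∃ x : R, r = r ^ 2 * x

/-- A commutative ring is semi-artinian if every nonzero homomorphic image of `R` in the
category of `R`-modules contains a simple submodule. -/
def IsSemiArtinianRing (R : Type u) [CommRing R] : Prop :=
  ∀ I : Ideal R, I ≠ ⊤ → ∃ S : Submodule R (R ⧸ I), IsSimpleModule R ↥S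

/-- A localizing subcategory: a class of objects of a triangulated category closed under
isomorphisms, shifts, cones of morphisms, and arbitrary set-indexed coproducts. -/
structure IsLocalizingSubcategory {T : Type u} [Category.{v} T] [HasZeroObject T]
    [Preadditive T] [HasShift T ℤ] [∀ n : ℤ, (shiftFunctor T n).Additive] [Pretriangulated T]
    (L : Set T) : Prop where
  mem_of_iso : ∀ {A B : T}, (A ≅ B) → A ∈ L → B ∈ L
  shift_mem : ∀ (A : T) (n : ℤ), A ∈ L → (A⟦n⟧ : T) ∈ L
  cone_mem : ∀ Tr : Triangle T, (Tr ∈ distTriang T) → Tr.obj₁ ∈ L → Tr.obj₂ ∈ L → Tr.obj₃ ∈ L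
  coproduct_mem : ∀ {ι : Type w} (f : ι → T), (∀ i, f i ∈ L) →
    ∀ c : Cofan f, IsColimit c → c.pt ∈ L

/-- The smallest localizing subcategory containing a class of objects `S`. -/
def localizingClosure {T : Type u} [Category.{v} T] [HasZeroObject T]
    [Preadditive T] [HasShift T ℤ] [∀ n : ℤ, (shiftFunctor T n).Additive] [Pretriangulated T]
    (S : Set T) : Set T :=
  ⋂₀ {L : Set T | IsLocalizingSubcategory.{w} L ∧ S ⊆ L}

/-- The residue field `k(P) = R_P` of an absolutely flat ring at a prime `P`, viewed as an
object of the derived category `D(R)`, placed in degree `0`. -/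
noncomputable def residueFieldObj (R : Type u) [CommRing R]
    [HasDerivedCategory.{w} (ModuleCat.{u} R)] (P : PrimeSpectrum R) :
    DerivedCategory (ModuleCat.{u} R) :=
  (DerivedCategory.singleFunctor (ModuleCat.{u} R) 0).obj
    (ModuleCat.of R (Localization.AtPrime P.asIdeal))

/-- Degreewise tensor product `R_P ⊗_R A` of a cochain complex `A` of `R`-modules with the
localization `R_P` (which is flat, so this computes the derived tensor product). -/
noncomputable def tensorResidueField (R : Type u) [CommRing R] (P : PrimeSpectrum R)
    (A : CochainComplex (ModuleCat.{u} R) ℤ) : CochainComplex (ModuleCat.{u} R) ℤ :=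
  ((tensorLeft (ModuleCat.of R (Localization.AtPrime P.asIdeal))).mapHomologicalComplex
    (ComplexShape.up ℤ)).obj A

/-!
Fix a localizing subcategory `L` containing all `R_P ⊗ A`, and call a module `N` good if `N ⊗ A`
is in `L`. Every module is flat, so `N ↦ N ⊗ A` is exact and good modules are closed under
coproducts and extensions.

They are also closed under infinite left resolutions. If these are spliced from short exact
sequences `0 ⟶ Z (n + 1) ⟶ M n ⟶ Z n ⟶ 0` with `M n` good, then the connecting maps
`Z n ⊗ A ⟶ (Z (n + 1) ⊗ A)⟦1⟧` have cone in `L` and vanish on homology. Because of the latter, the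
homotopy colimit of the sequence `(Z n ⊗ A)⟦n⟧` is zero. Because of the former, its first term
agrees with it modulo `L`, so `Z 0` is good.

Now consider the ideals `I` such that every module on which `I` acts with local units is good. For
a module `N` with local units from the sum of these ideals, `⨁ I • N` surjects onto `N`, and the
kernel has the same kind of local units; iterating gives a left resolution by good modules, so the
sum is again such an ideal. If this largest ideal `I` were proper, then `R ⧸ I` would have a
simple submodule `J ⧸ I`, which is a residue field `R_P`. But a module `N` with local units from
`J` is an extension of `N ⧸ I • N`, a sum of copies of `R_P`, by `I • N`, so that `J` would be
such an ideal too. Hence `R` itself is good.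
-/

section Homology

variable (J C : Type*) [Category* J] [Category* C] [Abelian C] [HasColimitsOfShape J C]

/-- The natural transformation from evaluation at `j` to the colimit functor. -/
noncomputable def evaluationToColim (j : J) : (evaluation J C).obj j ⟶ colim where
  app F := colimit.ι F j
  naturality F G f := by simp

variable [HasExactColimitsOfShape J C]

instance preservesColimitsOfShape_shortComplexHomologyFunctor :
    PreservesColimitsOfShape J (ShortComplex.homologyFunctor C) where
  preservesColimit {F} := by
    let S := (ShortComplex.FunctorEquivalence.inverse J C).obj F
    let c : Cocone F :=
      { pt := S.map colim
        ι.app j := S.mapNatTrans (evaluationToColim J C j)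
        ι.naturality j k f := by
          ext
          exacts [(colimit.cocone S.X₁).ι.naturality f, (colimit.cocone S.X₂).ι.naturality f,
            (colimit.cocone S.X₃).ι.naturality f] }
    have hc : IsColimit c := ShortComplex.isColimitOfIsColimitπ c (colimit.isColimit _)
      (colimit.isColimit _) (colimit.isColimit _)
    let α : F ⋙ ShortComplex.homologyFunctor C ≅ S.homology :=
      NatIso.ofComponents (fun j => S.mapHomologyIso ((evaluation J C).obj j)) fun f =>
        ((Iso.eq_inv_comp _).1 (NatTrans.app_homology ((evaluation J C).map f) S)).symm
    exact preservesColimit_of_preserves_colimit_cocone hc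
      (((IsColimit.precomposeHomEquiv α _).symm (colimit.isColimit S.homology)).ofIsoColimit
        (Cocone.ext (S.mapHomologyIso colim).symm fun j => (Iso.comp_inv_eq _).2
          ((Iso.eq_inv_comp _).1 (NatTrans.app_homology (evaluationToColim J C j) S))))

instance preservesColimitsOfShape_homologyFunctor {ι : Type*} (c : ComplexShape ι) (i : ι) :
    PreservesColimitsOfShape J (HomologicalComplex.homologyFunctor C c i) := by
  have : PreservesColimitsOfShape J (HomologicalComplex.shortComplexFunctor C c i) :=
    ⟨fun {F} => preservesColimit_of_preserves_colimit_cocone (colimit.isColimit F)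
      (ShortComplex.isColimitOfIsColimitπ _
        (isColimitOfPreserves (HomologicalComplex.eval C c (c.prev i)) (colimit.isColimit F))
        (isColimitOfPreserves (HomologicalComplex.eval C c i) (colimit.isColimit F))
        (isColimitOfPreserves (HomologicalComplex.eval C c (c.next i)) (colimit.isColimit F)))⟩
  exact preservesColimitsOfShape_of_natIso (HomologicalComplex.homologyFunctorIso C c i).symm

end Homology

section Coproducts

variable {C D E : Type*} [Category* C] [Category* D] [Category* E] {J : Type*}

theorem hasCoproductsOfShape_of_essSurj (F : C ⥤ D) [F.EssSurj] [HasCoproductsOfShape J C]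
    [PreservesColimitsOfShape (Discrete J) F] : HasCoproductsOfShape J D :=
  ⟨fun K => hasColimit_of_iso (G := K)
    (F := Discrete.functor (fun j => F.objPreimage (K.obj ⟨j⟩)) ⋙ F)
    (Discrete.natIso fun j => (F.objObjPreimageIso (K.obj j)).symm)⟩

theorem preservesCoproductsOfShape_of_essSurj_comp (F : C ⥤ D) (G : D ⥤ E) [F.EssSurj]
    [HasCoproductsOfShape J C] [PreservesColimitsOfShape (Discrete J) F]
    [PreservesColimitsOfShape (Discrete J) (F ⋙ G)] :
    PreservesColimitsOfShape (Discrete J) G where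
  preservesColimit {K} := by
    let K' := Discrete.functor fun j => F.objPreimage (K.obj ⟨j⟩)
    have : PreservesColimit (K' ⋙ F) G :=
      preservesColimit_of_preserves_colimit_cocone (isColimitOfPreserves F (colimit.isColimit K'))
        (isColimitOfPreserves (F ⋙ G) (colimit.isColimit K'))
    exact preservesColimit_of_iso_diagram G (K₁ := K' ⋙ F)
      (Discrete.natIso fun j => F.objObjPreimageIso (K.obj j))

theorem preservesCoproductsOfShape_of_essSurj [HasCoproductsOfShape J C] (F : C ⥤ D) [F.EssSurj]
    (exists_desc : ∀ (X : J → C) (Y : C) (f : ∀ j, F.obj (X j) ⟶ F.obj Y),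
      ∃ g : F.obj (∐ X) ⟶ F.obj Y, ∀ j, F.map (Sigma.ι X j) ≫ g = f j)
    (hom_ext : ∀ (X : J → C) (Y : C) (g g' : F.obj (∐ X) ⟶ F.obj Y),
      (∀ j, F.map (Sigma.ι X j) ≫ g = F.map (Sigma.ι X j) ≫ g') → g = g') :
    PreservesColimitsOfShape (Discrete J) F where
  preservesColimit {K} := by
    have preserves (X : J → C) : PreservesColimit (Discrete.functor X) F := by
      refine preservesColimit_of_preserves_colimit_cocone (coproductIsCoproduct X)
        ((isColimitMapCoconeCofanMkEquiv F X (Sigma.ι X)).symm ?_)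
      choose desc hdesc using fun s : Cofan fun j => F.obj (X j) =>
        exists_desc X (F.objPreimage s.pt) fun j => s.inj j ≫ (F.objObjPreimageIso s.pt).inv
      refine Cofan.IsColimit.mk _ (fun s => desc s ≫ (F.objObjPreimageIso s.pt).hom)
        (fun s j => ?_) fun s m hm => ?_
      · simp [reassoc_of% hdesc]
      · rw [← cancel_mono (F.objObjPreimageIso s.pt).inv]
        refine hom_ext X _ _ _ fun j => ?_
        simp [hdesc, ← hm]
    exact preservesColimit_of_iso_diagram F Discrete.natIsoFunctor.symm

variable (L : C ⥤ D) (W : MorphismProperty C) [L.IsLocalization W] [W.HasRightCalculusOfFractions]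

theorem exists_map_comp_eq_map {X Y : C} (g : L.obj X ⟶ L.obj Y) :
    ∃ (Z : C) (s : Z ⟶ X) (f : Z ⟶ Y), W s ∧ L.map s ≫ g = L.map f := by
  obtain ⟨φ, rfl⟩ := Localization.exists_rightFraction L W g
  exact ⟨_, φ.s, φ.f, φ.hs, φ.map_s_comp_map L _⟩

theorem exists_map_comp_eq_map₂ {X Y : C} (g g' : L.obj X ⟶ L.obj Y) :
    ∃ (Z : C) (s : Z ⟶ X) (f f' : Z ⟶ Y),
      W s ∧ L.map s ≫ g = L.map f ∧ L.map s ≫ g' = L.map f' := by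
  obtain ⟨Z₁, s₁, f₁, hs₁, hf₁⟩ := exists_map_comp_eq_map L W g
  obtain ⟨Z₂, s₂, f₂, hs₂, hf₂⟩ := exists_map_comp_eq_map L W (L.map s₁ ≫ g')
  exact ⟨Z₂, s₂ ≫ s₁, s₂ ≫ f₁, f₂, W.comp_mem _ _ hs₂ hs₁, by simp [hf₁], by simp [hf₂]⟩

theorem exists_comp_eq_comp {A X Z Y : C} (i : A ⟶ X) {s : Z ⟶ X} (hs : W s) {f f' : Z ⟶ Y}
    {g g' : L.obj X ⟶ L.obj Y} (hf : L.map s ≫ g = L.map f) (hf' : L.map s ≫ g' = L.map f')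
    (h : L.map i ≫ g = L.map i ≫ g') :
    ∃ (B : C) (t : B ⟶ A) (k : B ⟶ Z), W t ∧ t ≫ i = k ≫ s ∧ k ≫ f = k ≫ f' := by
  obtain ⟨ψ, hψ⟩ := (MorphismProperty.LeftFraction.mk i s hs).exists_rightFraction
  dsimp at hψ
  have hψf : L.map (ψ.f ≫ f) = L.map (ψ.f ≫ f') := by
    rw [L.map_comp, L.map_comp, ← hf, ← hf', ← L.map_comp_assoc, ← L.map_comp_assoc, ← hψ,
      L.map_comp, Category.assoc, Category.assoc, h]
  obtain ⟨B, u, hu, huf⟩ := (MorphismProperty.map_eq_iff_precomp L W _ _).1 hψf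
  exact ⟨B, u ≫ ψ.s, u ≫ ψ.f, W.comp_mem _ _ hu ψ.hs, by simp [hψ], by simpa using huf⟩

theorem preservesCoproductsOfShape_of_isLocalization [HasCoproductsOfShape J C]
    [W.IsStableUnderCoproductsOfShape J] : PreservesColimitsOfShape (Discrete J) L := by
  have := Localization.essSurj L W
  have sigmaMap_mem {X Y : J → C} (s : ∀ j, X j ⟶ Y j) (hs : ∀ j, W (s j)) :
      W (Limits.Sigma.map s) :=
    MorphismProperty.colimMap _ fun j => hs j.as
  refine preservesCoproductsOfShape_of_essSurj L (fun X Y g => ?_) fun X Y g g' hg => ?_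
  · choose Z s f hs hf using fun j => exists_map_comp_eq_map L W (g j)
    have := Localization.inverts L W _ (sigmaMap_mem s hs)
    refine ⟨inv (L.map (Limits.Sigma.map s)) ≫ L.map (Limits.Sigma.desc f), fun j => ?_⟩
    have := Localization.inverts L W _ (hs j)
    rw [← cancel_epi (L.map (s j)), hf, ← Functor.map_comp_assoc, ← Limits.Sigma.ι_map,
      Functor.map_comp_assoc, IsIso.hom_inv_id_assoc, ← Functor.map_comp, Limits.Sigma.ι_desc]
  · obtain ⟨Z, s, f, f', hs, hf, hf'⟩ := exists_map_comp_eq_map₂ L W g g'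
    choose B t k ht htk hk using fun j =>
      exists_comp_eq_comp L W (Limits.Sigma.ι X j) hs hf hf' (hg j)
    have hdesc : Limits.Sigma.desc k ≫ s = Limits.Sigma.map t :=
      Limits.Sigma.hom_ext _ _ fun j => by simp [htk]
    have hff' : Limits.Sigma.desc k ≫ f = Limits.Sigma.desc k ≫ f' :=
      Limits.Sigma.hom_ext _ _ fun j => by simp [hk]
    have := Localization.inverts L W _ (sigmaMap_mem t ht)
    rw [← cancel_epi (L.map (Limits.Sigma.map t)), ← hdesc, L.map_comp, Category.assoc,
      Category.assoc, hf, hf', ← L.map_comp, ← L.map_comp, hff']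

theorem isStableUnderColimitsOfShape_inverseImage {K : Type*} [Category* K] (F : C ⥤ D)
    (W : MorphismProperty D) [PreservesColimitsOfShape K F] [W.IsStableUnderColimitsOfShape K] :
    (W.inverseImage F).IsStableUnderColimitsOfShape K where
  condition _ _ _ _ hc₁ hc₂ f hf _ hφ :=
    MorphismProperty.IsStableUnderColimitsOfShape.condition _ _ _ _ (isColimitOfPreserves F hc₁)
      (isColimitOfPreserves F hc₂) (Functor.whiskerRight f F) hf _ fun j => by
        simp [← Functor.map_comp, hφ]

end Coproducts

section HomotopyCategory

variable {V : Type*} [Category* V] [Preadditive V] {ι : Type*} {J : Type*}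
  [HasCoproductsOfShape J V]

theorem nonempty_homotopy_of_sigma_ι {c : ComplexShape ι} {K : J → HomologicalComplex V c}
    {L : HomologicalComplex V c} {f g : ∐ K ⟶ L}
    (h : ∀ j, Homotopy (Limits.Sigma.ι K j ≫ f) (Limits.Sigma.ι K j ≫ g)) :
    Nonempty (Homotopy f g) := by
  have hK (p : ι) := isColimitCofanMkObjOfIsColimit (HomologicalComplex.eval V c p) K _
    (coproductIsCoproduct K)
  have hom_ext {p : ι} {Z : V} {a b : (∐ K).X p ⟶ Z}
      (hab : ∀ j, (Limits.Sigma.ι K j).f p ≫ a = (Limits.Sigma.ι K j).f p ≫ b) : a = b :=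
    Cofan.IsColimit.hom_ext (hK p) _ _ hab
  let H (p q : ι) : (∐ K).X p ⟶ L.X q := Cofan.IsColimit.desc (hK p) fun j => (h j).hom p q
  have fac (j : J) : (fun p q => (Limits.Sigma.ι K j).f p ≫ H p q) = (h j).hom := by
    funext p q
    exact Cofan.IsColimit.fac (hK p) _ j
  refine ⟨⟨H, fun p q hpq => hom_ext fun j => ?_, fun p => hom_ext fun j => ?_⟩⟩
  · rw [congrFun (congrFun (fac j) p) q, (h j).zero p q hpq, comp_zero]
  · have comm := (h j).comm p
    rw [← fac, dNext_comp_left, prevD_comp_left] at comm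
    simpa only [Preadditive.comp_add, HomologicalComplex.comp_f] using comm

instance preservesCoproductsOfShape_homotopyCategoryQuotient (c : ComplexShape ι) :
    PreservesColimitsOfShape (Discrete J) (HomotopyCategory.quotient V c) := by
  refine preservesCoproductsOfShape_of_essSurj _ (fun X Y f => ?_) fun X Y g g' h => ?_
  · choose f' hf' using fun j => (HomotopyCategory.quotient V c).map_surjective (f j)
    exact ⟨(HomotopyCategory.quotient V c).map (Limits.Sigma.desc f'), fun j => by
      rw [← Functor.map_comp, Limits.Sigma.ι_desc, hf']⟩
  · obtain ⟨g, rfl⟩ := (HomotopyCategory.quotient V c).map_surjective g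
    obtain ⟨g', rfl⟩ := (HomotopyCategory.quotient V c).map_surjective g'
    simp only [← Functor.map_comp] at h
    exact HomotopyCategory.eq_of_homotopy _ _
      (nonempty_homotopy_of_sigma_ι fun j => HomotopyCategory.homotopyOfEq _ _ (h j)).some

end HomotopyCategory

section QuasiIso

variable {C : Type*} [Category* C] [Abelian C] {J : Type*} [HasCoproductsOfShape J C]
  {ι : Type*} (c : ComplexShape ι)

instance hasCoproductsOfShape_homotopyCategory : HasCoproductsOfShape J (HomotopyCategory C c) :=
  hasCoproductsOfShape_of_essSurj (HomotopyCategory.quotient C c)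

variable [HasExactColimitsOfShape (Discrete J) C]

instance preservesCoproductsOfShape_homotopyCategoryHomologyFunctor (i : ι) :
    PreservesColimitsOfShape (Discrete J) (HomotopyCategory.homologyFunctor C c i) :=
  have := preservesColimitsOfShape_of_natIso (J := Discrete J)
    (HomotopyCategory.homologyFunctorFactors C c i).symm
  preservesCoproductsOfShape_of_essSurj_comp (HomotopyCategory.quotient C c) _

instance isStableUnderCoproductsOfShape_quasiIso :
    (HomotopyCategory.quasiIso C c).IsStableUnderCoproductsOfShape J where
  condition _ _ _ _ hc₁ hc₂ f hf φ hφ i :=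
    (isStableUnderColimitsOfShape_inverseImage (HomotopyCategory.homologyFunctor C c i)
      (.isomorphisms C)).condition _ _ _ _ hc₁ hc₂ f (fun j => hf j i) φ hφ

end QuasiIso

section DerivedCategory

variable {C : Type*} [Category* C] [Abelian C] [HasDerivedCategory C]
  {J : Type*} [HasCoproductsOfShape J C] [HasExactColimitsOfShape (Discrete J) C]

instance preservesCoproductsOfShape_derivedCategoryQ :
    PreservesColimitsOfShape (Discrete J) (DerivedCategory.Q (C := C)) := by
  have : (HomotopyCategory.quasiIso C (.up ℤ)).HasRightCalculusOfFractions := by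
    rw [HomotopyCategory.quasiIso_eq_trW_subcategoryAcyclic]
    infer_instance
  have := preservesCoproductsOfShape_of_isLocalization (J := J) (DerivedCategory.Qh (C := C))
    (HomotopyCategory.quasiIso C (.up ℤ))
  exact preservesColimitsOfShape_of_natIso (DerivedCategory.quotientCompQhIso C)

instance hasCoproductsOfShape_derivedCategory : HasCoproductsOfShape J (DerivedCategory C) :=
  hasCoproductsOfShape_of_essSurj (DerivedCategory.Q (C := C))

instance preservesCoproductsOfShape_derivedCategoryHomologyFunctor (n : ℤ) :
    PreservesColimitsOfShape (Discrete J) (DerivedCategory.homologyFunctor C n) :=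
  have := preservesColimitsOfShape_of_natIso (J := Discrete J)
    (DerivedCategory.homologyFunctorFactors C n).symm
  preservesCoproductsOfShape_of_essSurj_comp (DerivedCategory.Q (C := C)) _

end DerivedCategory

section Triangulated

variable {C : Type*} [Category* C] [HasZeroObject C] [Preadditive C] [HasShift C ℤ]
  [∀ n : ℤ, (shiftFunctor C n).Additive] [Pretriangulated C] (P : ObjectProperty C)
  [P.IsTriangulated] {J : Type*}

open Pretriangulated.Opposite in
instance isStableUnderCoproductsOfShape_trW [P.IsClosedUnderIsomorphisms] [HasCoproductsOfShape J C]
    [P.IsClosedUnderColimitsOfShape (Discrete J)] :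
    P.trW.IsStableUnderCoproductsOfShape J := by
  refine .mk _ _ fun X Y _ _ f hf => P.trW_of_op ?_
  have hf_op (j : J) : P.op.trW (f j).op := P.trW_op_iff.2 (hf j)
  have hPi : P.op.trW (Limits.Pi.map fun j => (f j).op) := by
    choose Z g h hT hZ using hf_op
    exact .mk _ (productTriangle_distinguished _ hT)
      (P.op.prop_of_iso (opCoproductIsoProduct fun j => (Z j).unop)
        (P.prop_of_isColimit (coproductIsCoproduct _) fun j => hZ j.as))
  refine (P.op.trW.arrow_mk_iso_iff (Arrow.isoMk (opCoproductIsoProduct Y)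
    (opCoproductIsoProduct X) (Limits.Pi.hom_ext _ _ fun j => ?_))).2 hPi
  simp [← op_comp]

end Triangulated

section Telescope

section Preadditive

variable {C : Type*} [Category* C] [HasCoproductsOfShape ℕ C]

/-- The endomorphism of the coproduct of a sequence given by its transition maps: the homotopy
colimit of the sequence is the cone of the difference between the identity and this map. -/
noncomputable def telescopeShift (X : ℕ → C) (d : ∀ n, X n ⟶ X (n + 1)) : ∐ X ⟶ ∐ X :=
  Limits.Sigma.desc fun n => d n ≫ Limits.Sigma.ι X (n + 1)

@[simp]
theorem ι_telescopeShift (X : ℕ → C) (d : ∀ n, X n ⟶ X (n + 1)) (n : ℕ) :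
    Limits.Sigma.ι X n ≫ telescopeShift X d = d n ≫ Limits.Sigma.ι X (n + 1) := by
  simp [telescopeShift]

variable [Preadditive C]

/-- The telescope of a constant sequence splits; the retraction comes from the geometric series
`-(s + s ^ 2 + ⋯)`, cut off by starting at `0`. -/
noncomputable def splittingTelescopeConst (A : C) :
    (ShortComplex.mk (𝟙 _ - telescopeShift (fun _ => A) fun _ => 𝟙 A)
      (Limits.Sigma.desc fun _ => 𝟙 A)
      (Limits.Sigma.hom_ext _ _ fun n => by simp [reassoc_of% ι_telescopeShift])).Splitting where
  r := Limits.Sigma.desc fun n => -∑ k ∈ Finset.range n, Limits.Sigma.ι (fun _ => A) k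
  s := Limits.Sigma.ι (fun _ => A) 0
  f_r := Limits.Sigma.hom_ext _ _ fun n => by
    simp [reassoc_of% ι_telescopeShift, Finset.sum_range_succ]
  s_g := by simp
  id := Limits.Sigma.hom_ext _ _ fun n => by
    simp [Preadditive.sum_comp, add_assoc, ← Finset.sum_range_succ',
      Finset.sum_range_succ]

end Preadditive

variable {C : Type*} [Category* C] [HasZeroObject C] [Preadditive C] [HasShift C ℤ]
  [∀ n : ℤ, (shiftFunctor C n).Additive] [Pretriangulated C]

theorem distinguished_of_splitting {S : ShortComplex C} (s : S.Splitting) :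
    Triangle.mk S.f S.g 0 ∈ distTriang C :=
  have comm₁ : S.f ≫ s.isoBinaryBiproduct.hom = biprod.inl :=
    biprod.hom_ext _ _ (by simp) (by simp)
  have comm₂ : s.isoBinaryBiproduct.hom ≫ biprod.snd = S.g := by simp
  isomorphic_distinguished _ (binaryBiproductTriangle_distinguished S.X₁ S.X₃) _
    (Triangle.isoMk _ _ (Iso.refl _) s.isoBinaryBiproduct (Iso.refl _)
      (comm₁.trans (Category.id_comp _).symm) ((Category.comp_id _).trans comm₂.symm)
      (zero_comp.trans comp_zero.symm))

variable [IsTriangulated C] (P : ObjectProperty C) [P.IsTriangulated] [P.IsClosedUnderIsomorphisms]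

theorem trW_of_postcomp {X Y Z : C} (f : X ⟶ Y) (g : Y ⟶ Z) (hg : P.trW g)
    (hfg : P.trW (f ≫ g)) : P.trW f := by
  obtain ⟨Z₁₂, v₁₂, w₁₂, H₁₂⟩ := distinguished_cocone_triangle f
  obtain ⟨Z₂₃, v₂₃, w₂₃, H₂₃⟩ := distinguished_cocone_triangle g
  obtain ⟨Z₁₃, v₁₃, w₁₃, H₁₃⟩ := distinguished_cocone_triangle (f ≫ g)
  exact ⟨_, _, _, H₁₂, P.ext_of_isTriangulatedClosed₁ _
    (Triangulated.someOctahedron rfl H₁₂ H₂₃ H₁₃).mem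
    ((P.trW_iff_of_distinguished _ H₁₃).1 hfg) ((P.trW_iff_of_distinguished _ H₂₃).1 hg)⟩

theorem prop_of_isIso_id_sub_telescopeShift [HasCoproductsOfShape ℕ C]
    [P.IsClosedUnderColimitsOfShape (Discrete ℕ)] (X : ℕ → C) (d : ∀ n, X n ⟶ X (n + 1))
    (hd : ∀ n, P.trW (d n)) [IsIso (𝟙 _ - telescopeShift X d)] : P (X 0) := by
  let s := telescopeShift X d
  let s₀ := telescopeShift (fun _ => X 0) fun _ => 𝟙 _
  let D (n : ℕ) : X 0 ⟶ X n := (Functor.ofSequence d).map (homOfLE n.zero_le)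
  have D_zero : D 0 = 𝟙 (X 0) := (Functor.ofSequence d).map_id 0
  have D_succ (n : ℕ) : D (n + 1) = D n ≫ d n :=
    ((Functor.ofSequence d).map_comp (homOfLE n.zero_le) (homOfLE (Nat.le_add_right n 1))).trans
      (congrArg (D n ≫ ·) (Functor.ofSequence_map_homOfLE_succ d n))
  have trW_D (n : ℕ) : P.trW (D n) := by
    induction n with
    | zero => exact D_zero ▸ P.trW_of_isIso _
    | succ n ih => exact D_succ n ▸ P.trW.comp_mem _ _ ih (hd n)
  have trW_sigmaMap : P.trW (Limits.Sigma.map D) :=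
    MorphismProperty.colimMap _ fun n => trW_D n.as
  have comm : (𝟙 _ - s₀) ≫ Limits.Sigma.map D = Limits.Sigma.map D ≫ (𝟙 _ - s) :=
    Limits.Sigma.hom_ext _ _ fun n => by
      simp [s, s₀, D_succ, reassoc_of% ι_telescopeShift]
  refine (P.trW_iff_of_distinguished _ (distinguished_of_splitting (splittingTelescopeConst _))).1
    (trW_of_postcomp P _ _ trW_sigmaMap ?_)
  exact comm ▸ P.trW.comp_mem _ _ trW_sigmaMap (P.trW_of_isIso _)

end Telescope

section Resolution

open DerivedCategory

variable {C : Type*} [Category* C] [Abelian C] [HasDerivedCategory C]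

theorem homologyFunctor_map_shift_eq_zero {X Y : DerivedCategory C} {f : X ⟶ Y}
    (hf : ∀ n : ℤ, (homologyFunctor C n).map f = 0) (k n : ℤ) :
    (homologyFunctor C n).map (f⟦k⟧') = 0 := by
  have comm := (homologyFunctor C 0).shiftIso_hom_naturality k n (k + n) rfl f
  have shift_map : ((homologyFunctor C 0).shift (k + n)).map f = 0 := hf _
  rw [shift_map, comp_zero] at comm
  exact (Iso.cancel_iso_hom_right _ _
    (((homologyFunctor C 0).shiftIso k n (k + n) rfl).app Y)).1 (comm.trans zero_comp.symm)

theorem homologyFunctor_map_mor₃_eq_zero {T : Triangle (DerivedCategory C)}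
    (hT : T ∈ distTriang (DerivedCategory C)) (n : ℤ) [Epi ((homologyFunctor C n).map T.mor₂)] :
    (homologyFunctor C n).map T.mor₃ = 0 := by
  rw [← cancel_epi ((homologyFunctor C n).map T.mor₂), ← Functor.map_comp, comp_zero,
    comp_distTriang_mor_zero₂₃ _ hT, Functor.map_zero]

variable [HasCoproductsOfShape ℕ C] [HasExactColimitsOfShape (Discrete ℕ) C]

theorem homologyFunctor_map_telescopeShift_eq_zero (X : ℕ → DerivedCategory C)
    (d : ∀ n, X n ⟶ X (n + 1)) (k : ℤ) (hd : ∀ n, (homologyFunctor C k).map (d n) = 0) :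
    (homologyFunctor C k).map (telescopeShift X d) = 0 := by
  refine Cofan.IsColimit.hom_ext (isColimitCofanMkObjOfIsColimit (homologyFunctor C k) X _
    (coproductIsCoproduct X)) _ _ fun n => ?_
  rw [cofan_mk_inj, ← Functor.map_comp, ι_telescopeShift, Functor.map_comp, hd, zero_comp,
    comp_zero]

theorem isIso_id_sub_telescopeShift (X : ℕ → DerivedCategory C) (d : ∀ n, X n ⟶ X (n + 1))
    (hd : ∀ n k, (homologyFunctor C k).map (d n) = 0) : IsIso (𝟙 _ - telescopeShift X d) := by
  refine (isIso_iff C _).2 fun k => ?_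
  rw [Functor.map_sub, homologyFunctor_map_telescopeShift_eq_zero X d k (hd · k), sub_zero]
  infer_instance

theorem prop_of_resolution (P : ObjectProperty (DerivedCategory C)) [P.IsTriangulated]
    [P.IsClosedUnderIsomorphisms] [P.IsClosedUnderColimitsOfShape (Discrete ℕ)]
    (X M : ℕ → DerivedCategory C) (f : ∀ n, X (n + 1) ⟶ M n) (g : ∀ n, M n ⟶ X n)
    (δ : ∀ n, X n ⟶ (X (n + 1))⟦(1 : ℤ)⟧)
    (hT : ∀ n, Triangle.mk (f n) (g n) (δ n) ∈ distTriang (DerivedCategory C))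
    (hM : ∀ n, P (M n)) (hg : ∀ n k, Epi ((homologyFunctor C k).map (g n))) : P (X 0) := by
  have trW_δ (n : ℕ) : P.trW (δ n) := .mk' P (rot_of_distTriang _ (hT n)) (hM n)
  have homology_δ (n : ℕ) (k : ℤ) : (homologyFunctor C k).map (δ n) = 0 :=
    have : Epi ((homologyFunctor C k).map (Triangle.mk (f n) (g n) (δ n)).mor₂) := hg n k
    homologyFunctor_map_mor₃_eq_zero (hT n) k
  let shiftAdd (n : ℕ) := (shiftFunctorAdd' (DerivedCategory C) (1 : ℤ) (n : ℤ)
    ((n + 1 : ℕ) : ℤ) (by push_cast; ring)).app (X (n + 1))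
  let d (n : ℕ) : (X n)⟦(n : ℤ)⟧ ⟶ (X (n + 1))⟦((n + 1 : ℕ) : ℤ)⟧ :=
    (δ n)⟦(n : ℤ)⟧' ≫ (shiftAdd n).inv
  have trW_d (n : ℕ) : P.trW (d n) :=
    P.trW.comp_mem _ _ ((trW_δ n).shift (P := P) n) (P.trW_of_isIso _)
  have := isIso_id_sub_telescopeShift (fun n => (X n)⟦(n : ℤ)⟧) d fun n k => by
    rw [Functor.map_comp, homologyFunctor_map_shift_eq_zero (homology_δ n), zero_comp]
  exact P.prop_of_iso ((shiftFunctorZero _ ℤ).app (X 0))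
    (prop_of_isIso_id_sub_telescopeShift P (fun n => (X n)⟦(n : ℤ)⟧) d trW_d)

end Resolution

section AbsolutelyFlat

variable {R : Type u} [CommRing R]

theorem IsAbsolutelyFlat.isIdempotentElem (hR : IsAbsolutelyFlat R) (I : Ideal R) :
    IsIdempotentElem I := by
  refine le_antisymm Ideal.mul_le_left fun r hr => ?_
  obtain ⟨x, hx⟩ := hR r
  rw [hx, pow_two, mul_assoc]
  exact Ideal.mul_mem_mul hr (I.mul_mem_right x hr)

theorem rTensor_subtype_span_injective {e : R} (he : IsIdempotentElem e) (M : Type*)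
    [AddCommGroup M] [Module R M] :
    Function.Injective (LinearMap.rTensor M (Ideal.span {e}).subtype) := by
  let proj : R →ₗ[R] Ideal.span {e} :=
    LinearMap.toSpanSingleton R _ ⟨e, Ideal.mem_span_singleton_self e⟩
  have proj_comp_subtype : proj ∘ₗ (Ideal.span {e}).subtype = LinearMap.id := by
    ext ⟨x, hx⟩
    obtain ⟨y, rfl⟩ := Ideal.mem_span_singleton'.1 hx
    simp [proj, mul_assoc, he.eq]
  have rTensor_proj_comp : LinearMap.rTensor M proj ∘ₗ
      LinearMap.rTensor M (Ideal.span {e}).subtype = LinearMap.id := by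
    rw [← LinearMap.rTensor_comp, proj_comp_subtype, LinearMap.rTensor_id]
  exact Function.LeftInverse.injective (LinearMap.congr_fun rTensor_proj_comp)

theorem IsAbsolutelyFlat.flat (hR : IsAbsolutelyFlat R) (M : Type*) [AddCommGroup M]
    [Module R M] : Module.Flat R M := by
  refine Module.Flat.iff_rTensor_injective.2 fun I hI => ?_
  obtain ⟨e, he, rfl⟩ := (Ideal.isIdempotentElem_iff_of_fg I hI).1 (hR.isIdempotentElem I)
  exact rTensor_subtype_span_injective he M

variable {S : Type*} [CommRing S] [Algebra R S]

theorem IsAbsolutelyFlat.surjective_algebraMap (hR : IsAbsolutelyFlat R) (M : Submonoid R)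
    [IsLocalization M S] : Function.Surjective (algebraMap R S) := by
  intro y
  obtain ⟨r, s, rfl⟩ := IsLocalization.exists_mk'_eq M y
  obtain ⟨x, hx⟩ := hR s
  refine ⟨r * x, ?_⟩
  rw [eq_comm, IsLocalization.mk'_eq_iff_eq_mul, ← map_mul, IsLocalization.eq_iff_exists M]
  exact ⟨s, by linear_combination r * hx⟩

theorem IsAbsolutelyFlat.ker_algebraMap (hR : IsAbsolutelyFlat R) (p : Ideal R) [p.IsPrime]
    [IsLocalization.AtPrime S p] : RingHom.ker (algebraMap R S) = p := by
  ext r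
  rw [RingHom.mem_ker, IsLocalization.map_eq_zero_iff p.primeCompl]
  constructor
  · rintro ⟨s, hs⟩
    exact (Ideal.IsPrime.mem_or_mem ‹_› (hs ▸ p.zero_mem)).resolve_left s.2
  · intro hr
    obtain ⟨x, hx⟩ := hR r
    refine ⟨⟨1 - r * x, fun h => Ideal.IsPrime.one_notMem ‹_› ?_⟩, ?_⟩
    · simpa using p.add_mem h (p.mul_mem_right x hr)
    · change (1 - r * x) * r = 0
      linear_combination hx

theorem IsAbsolutelyFlat.nonempty_quotient_linearEquiv (hR : IsAbsolutelyFlat R) (p : Ideal R)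
    [p.IsPrime] [IsLocalization.AtPrime S p] : Nonempty ((R ⧸ p) ≃ₗ[R] S) :=
  ⟨Submodule.quotEquivOfEq _ _ (hR.ker_algebraMap (S := S) p).symm ≪≫ₗ
    (Algebra.linearMap R S).quotKerEquivOfSurjective (hR.surjective_algebraMap p.primeCompl)⟩

end AbsolutelyFlat

section LocalUnits

variable {R : Type u} [CommRing R] {I J : Ideal R} {N : Type*} [AddCommGroup N] [Module R N]

/-- The ideal `I` acts on the module `N` with local units. Unlike the condition `I • N = N`, which
is equivalent over an absolutely flat ring, this visibly passes to submodules. -/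
def HasLocalUnits (I : Ideal R) (N : Type*) [AddCommGroup N] [Module R N] : Prop :=
  ∀ x : N, ∃ e ∈ I, e • x = x

theorem exists_smul_add_eq_self {x y : N} (hx : ∃ e ∈ I, e • x = x) (hy : ∃ e ∈ I, e • y = y) :
    ∃ e ∈ I, e • (x + y) = x + y := by
  obtain ⟨e, he, hx⟩ := hx
  obtain ⟨f, hf, hy⟩ := hy
  refine ⟨e + f - e * f, I.sub_mem (I.add_mem he hf) (I.mul_mem_right _ he), ?_⟩
  have hx' : (e + f - e * f) • x = x := by
    rw [sub_smul, add_smul, mul_comm, mul_smul, hx, add_sub_cancel_right]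
  have hy' : (e + f - e * f) • y = y := by
    rw [sub_smul, add_smul, mul_smul, hy, add_sub_cancel_left]
  rw [smul_add, hx', hy']

theorem HasLocalUnits.submodule (h : HasLocalUnits I N) (N' : Submodule R N) :
    HasLocalUnits I N' := fun x =>
  let ⟨e, he, hx⟩ := h x
  ⟨e, he, Subtype.ext hx⟩

theorem HasLocalUnits.mono (hIJ : I ≤ J) (h : HasLocalUnits I N) : HasLocalUnits J N := fun x =>
  let ⟨e, he, hx⟩ := h x
  ⟨e, hIJ he, hx⟩

theorem HasLocalUnits.directSum {ι : Type*} {X : ι → Type*} [∀ a, AddCommGroup (X a)]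
    [∀ a, Module R (X a)] (h : ∀ a, HasLocalUnits I (X a)) :
    HasLocalUnits I (DirectSum ι X) := fun x => by
  classical
  induction x using DirectSum.induction_on with
  | zero => exact ⟨0, I.zero_mem, smul_zero 0⟩
  | of a x =>
    obtain ⟨e, he, hx⟩ := h a x
    exact ⟨e, he, by rw [← DirectSum.lof_eq_of R, ← map_smul, hx]⟩
  | add x y hx hy => exact exists_smul_add_eq_self hx hy

theorem IsAbsolutelyFlat.hasLocalUnits_smul_top (hR : IsAbsolutelyFlat R) (I : Ideal R)
    (N : Type*) [AddCommGroup N] [Module R N] : HasLocalUnits I (I • ⊤ : Submodule R N) := by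
  rintro ⟨x, hx⟩
  suffices ∃ e ∈ I, e • x = x from
    let ⟨e, he, hx⟩ := this
    ⟨e, he, Subtype.ext hx⟩
  refine Submodule.smul_induction_on hx (fun r hr n _ => ?_) fun x y => exists_smul_add_eq_self
  obtain ⟨y, hy⟩ := hR r
  refine ⟨r * y, I.mul_mem_right _ hr, ?_⟩
  rw [smul_smul, mul_right_comm, ← pow_two, ← hy]

theorem iSup_smul_top_eq_top_of_hasLocalUnits {s : Set (Ideal R)}
    (h : HasLocalUnits (sSup s) N) : ⨆ I : s, (I.1 • ⊤ : Submodule R N) = ⊤ := by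
  rw [← Submodule.iSup_smul, ← sSup_eq_iSup', eq_top_iff]
  intro x _
  obtain ⟨e, he, hx⟩ := h x
  exact hx ▸ Submodule.smul_mem_smul he trivial

end LocalUnits

section Simple

variable {R : Type u} [CommRing R] {I : Ideal R}

theorem lt_comap_mkQ (S : Submodule R (R ⧸ I)) [Nontrivial S] : I < S.comap I.mkQ := by
  refine (Submodule.le_comap_mkQ I S).lt_of_ne fun h => Submodule.nontrivial_iff_ne_bot.1 ‹_› ?_
  rw [← Submodule.map_comap_eq_of_surjective I.mkQ_surjective S, ← h, Submodule.mkQ_map_self]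

theorem annihilator_mul_comap_mkQ_le (S : Submodule R (R ⧸ I)) :
    Module.annihilator R S * S.comap I.mkQ ≤ I := by
  refine Ideal.mul_le.2 fun a ha j hj => ?_
  have smul_mk : a • (⟨I.mkQ j, hj⟩ : S) = 0 := Module.mem_annihilator.1 ha _
  exact (Submodule.Quotient.mk_eq_zero I).1 (congrArg Subtype.val smul_mk)

end Simple

section LeftResolutions

variable {C : Type*} [Category* C] [HasZeroMorphisms C] {P : ObjectProperty C}

/-- A class of objects containing every object with an infinite left resolution by members of the
class. Resolutions are spliced from short exact sequences `0 ⟶ Z (n + 1) ⟶ M n ⟶ Z n ⟶ 0`. -/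
def IsClosedUnderLeftResolutions (P : ObjectProperty C) : Prop :=
  ∀ (Z M : ℕ → C) (f : ∀ n, Z (n + 1) ⟶ M n) (g : ∀ n, M n ⟶ Z n) (w : ∀ n, f n ≫ g n = 0),
    (∀ n, (ShortComplex.mk (f n) (g n) (w n)).ShortExact) → (∀ n, P (M n)) → P (Z 0)

theorem IsClosedUnderLeftResolutions.le (hP : IsClosedUnderLeftResolutions P)
    {Q : ObjectProperty C} (hQ : ∀ N, Q N → ∃ (K M : C) (f : K ⟶ M) (g : M ⟶ N) (w : f ≫ g = 0),
      (ShortComplex.mk f g w).ShortExact ∧ P M ∧ Q K) : Q ≤ P := by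
  intro N hN
  choose K M f g w exact_fg hM hK using hQ
  let Z (n : ℕ) : {N // Q N} := Nat.rec ⟨N, hN⟩ (fun _ N => ⟨K N.1 N.2, hK N.1 N.2⟩) n
  exact hP (fun n => (Z n).1) (fun n => M _ (Z n).2) (fun n => f _ (Z n).2)
    (fun n => g _ (Z n).2) (fun n => w _ (Z n).2) (fun n => exact_fg _ (Z n).2)
    fun n => hM _ (Z n).2

end LeftResolutions

section Modules

section Ring

variable {R : Type*} [Ring R]

theorem shortExact_ker {M N : Type v} [AddCommGroup M] [Module R M] [AddCommGroup N]
    [Module R N] {g : M →ₗ[R] N} (hg : Function.Surjective g) :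
    (ShortComplex.mk (ModuleCat.ofHom g.ker.subtype) (ModuleCat.ofHom g)
      (by ext x; exact x.2)).ShortExact :=
  ModuleCat.shortComplex_shortExact _ g.exact_subtype_ker_map (Submodule.injective_subtype _) hg

theorem shortExact_mkQ {M : Type v} [AddCommGroup M] [Module R M] (N : Submodule R M) :
    (ShortComplex.mk (ModuleCat.ofHom N.subtype) (ModuleCat.ofHom N.mkQ)
      (by ext x; simp)).ShortExact :=
  ModuleCat.shortComplex_shortExact _ (LinearMap.exact_subtype_mkQ N)
    (Submodule.injective_subtype _) N.mkQ_surjective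

end Ring

variable {R : Type u} [CommRing R]

/-- The modules on which the ideal `I` acts with local units. -/
def locallyUnital (I : Ideal R) : ObjectProperty (ModuleCat.{v} R) := fun N => HasLocalUnits I N

variable {P : ObjectProperty (ModuleCat.{u} R)}
variable [∀ ι : Type u, P.IsClosedUnderColimitsOfShape (Discrete ι)]

theorem prop_directSum {ι : Type u} {X : ι → Type u} [∀ a, AddCommGroup (X a)]
    [∀ a, Module R (X a)] (h : ∀ a, P (ModuleCat.of R (X a))) :
    P (ModuleCat.of R (DirectSum ι X)) := by
  classical
  exact P.prop_of_isColimit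
    (ModuleCat.coproductCoconeIsColimit fun a => ModuleCat.of R (X a)) fun a => h a.as

theorem locallyUnital_sSup_le (hR : IsAbsolutelyFlat R) (hP : IsClosedUnderLeftResolutions P)
    {s : Set (Ideal R)} (hs : ∀ I ∈ s, locallyUnital I ≤ P) : locallyUnital (sSup s) ≤ P := by
  classical
  refine hP.le fun N hN => ?_
  let X (I : s) : Submodule R N := I.1 • ⊤
  have units_X (I : s) : HasLocalUnits I.1 (X I) := hR.hasLocalUnits_smul_top I N
  have surjective : Function.Surjective (DirectSum.coeLinearMap X) := by
    rw [← LinearMap.range_eq_top, DirectSum.range_coeLinearMap]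
    exact iSup_smul_top_eq_top_of_hasLocalUnits hN
  refine ⟨_, _, _, _, _, shortExact_ker surjective,
    prop_directSum fun I => hs I.1 I.2 (ModuleCat.of R (X I)) (units_X I), ?_⟩
  exact (HasLocalUnits.directSum fun I => (units_X I).mono (le_sSup I.2)).submodule _

variable [P.IsClosedUnderIsomorphisms]

theorem prop_of_isTorsionBySet {m : Ideal R} [m.IsMaximal] (hm : P (ModuleCat.of R (R ⧸ m)))
    {V : Type u} [AddCommGroup V] [Module R V] (hV : Module.IsTorsionBySet R V m) :
    P (ModuleCat.of R V) := by
  classical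
  let := Ideal.Quotient.field m
  let := hV.module
  have : IsScalarTower R (R ⧸ m) V := hV.isScalarTower
  let e : V ≃ₗ[R] DirectSum (Module.Basis.ofVectorSpaceIndex (R ⧸ m) V) fun _ => R ⧸ m :=
    ((Module.Basis.ofVectorSpace (R ⧸ m) V).repr.restrictScalars R).trans
      (finsuppLEquivDirectSum R (R ⧸ m) _)
  exact P.prop_of_iso e.symm.toModuleIso (prop_directSum fun _ => hm)

variable [P.IsClosedUnderExtensions]

theorem locallyUnital_le_of_mul_le (hR : IsAbsolutelyFlat R) {I J m : Ideal R} [m.IsMaximal]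
    (hmJ : m * J ≤ I) (hI : locallyUnital I ≤ P) (hm : P (ModuleCat.of R (R ⧸ m))) :
    locallyUnital J ≤ P := by
  intro N hN
  let IN : Submodule R N := I • ⊤
  refine P.prop_X₂_of_shortExact (shortExact_mkQ IN)
    (hI (ModuleCat.of R IN) (hR.hasLocalUnits_smul_top I N)) (prop_of_isTorsionBySet hm ?_)
  rintro x ⟨a, ha⟩
  obtain ⟨x, rfl⟩ := IN.mkQ_surjective x
  obtain ⟨c, hc, hx⟩ := hN x
  refine (Submodule.Quotient.mk_eq_zero IN).2 (?_ : a • x ∈ IN)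
  rw [← hx, smul_smul]
  exact Submodule.smul_mem_smul (hmJ (Ideal.mul_mem_mul ha hc)) trivial

theorem prop_of_isSemiArtinianRing (hR : IsAbsolutelyFlat R) (hR' : IsSemiArtinianRing R)
    (hP : IsClosedUnderLeftResolutions P)
    (hloc : ∀ p : PrimeSpectrum R, P (ModuleCat.of R (Localization.AtPrime p.asIdeal)))
    (N : ModuleCat.{u} R) : P N := by
  let I := sSup {I : Ideal R | locallyUnital I ≤ P}
  have hI : locallyUnital I ≤ P := locallyUnital_sSup_le hR hP fun _ => id
  suffices I = ⊤ from hI N fun x => ⟨1, this ▸ trivial, one_smul R x⟩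
  by_contra hne
  obtain ⟨S, hS⟩ := hR' I hne
  have := IsSimpleModule.nontrivial R S
  have maximal : (Module.annihilator R S).IsMaximal := IsSimpleModule.annihilator_isMaximal
  obtain ⟨e⟩ := hR.nonempty_quotient_linearEquiv (Module.annihilator R S)
    (S := Localization.AtPrime (Module.annihilator R S))
  have hJ : locallyUnital (S.comap I.mkQ) ≤ P :=
    locallyUnital_le_of_mul_le hR (annihilator_mul_comap_mkQ_le S) hI
      (P.prop_of_iso e.symm.toModuleIso (hloc ⟨_, maximal.isPrime⟩))
  exact (lt_comap_mkQ S).not_ge (le_sSup hJ)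

end Modules

section Localizing

variable {T : Type u} [Category.{v} T] [HasZeroObject T] [Preadditive T] [HasShift T ℤ]
  [∀ n : ℤ, (shiftFunctor T n).Additive] [Pretriangulated T] {L : ObjectProperty T}

theorem IsLocalizingSubcategory.isClosedUnderIsomorphisms
    (hL : IsLocalizingSubcategory.{w} {X | L X}) : L.IsClosedUnderIsomorphisms :=
  ⟨hL.mem_of_iso⟩

theorem IsLocalizingSubcategory.isClosedUnderColimitsOfShape
    (hL : IsLocalizingSubcategory.{w} {X | L X}) (ι : Type*) [Small.{w} ι] :
    L.IsClosedUnderColimitsOfShape (Discrete ι) :=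
  have : L.IsClosedUnderColimitsOfShape (Discrete (Shrink.{w} ι)) :=
    { colimitsOfShape_le _ h := hL.coproduct_mem _ (fun j => h.some.prop_diag_obj ⟨j⟩) _
        ((IsColimit.precomposeInvEquiv Discrete.natIsoFunctor _).symm h.some.isColimit) }
  .of_equivalence (Discrete.equivalence (equivShrink ι).symm)

theorem IsLocalizingSubcategory.isTriangulated (hL : IsLocalizingSubcategory.{w} {X | L X}) :
    L.IsTriangulated :=
  have := hL.isClosedUnderIsomorphisms
  have := hL.isClosedUnderColimitsOfShape PEmpty
  have : L.ContainsZero :=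
    ⟨⊥_ T, initialIsInitial.isZero, L.prop_colimit (Functor.empty T) fun j => j.as.elim⟩
  have : L.IsStableUnderShift ℤ := ⟨fun n => ⟨fun X => hL.shift_mem X n⟩⟩
  have : L.IsTriangulatedClosed₃ := .mk' hL.cone_mem
  have : L.IsTriangulatedClosed₂ := .of_isTriangulatedClosed₃
  {}

end Localizing

section ExactFunctor

variable {𝒜 C : Type*} [Category* 𝒜] [Category* C] [Abelian C] [HasDerivedCategory C]
  (P : ObjectProperty (DerivedCategory C)) [P.IsTriangulated] [P.IsClosedUnderIsomorphisms]
  [HasZeroMorphisms 𝒜] (F : 𝒜 ⥤ CochainComplex C ℤ) [F.PreservesZeroMorphisms]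
  [PreservesFiniteLimits F] [PreservesFiniteColimits F]

theorem isClosedUnderExtensions_inverseImage :
    (P.inverseImage (F ⋙ DerivedCategory.Q)).IsClosedUnderExtensions where
  prop_X₂_of_shortExact hS h₁ h₃ := P.ext_of_isTriangulatedClosed₂ _
    (DerivedCategory.triangleOfSES_distinguished (hS.map_of_exact F)) h₁ h₃

theorem isClosedUnderLeftResolutions_inverseImage [HasCoproductsOfShape ℕ C]
    [HasExactColimitsOfShape (Discrete ℕ) C] [P.IsClosedUnderColimitsOfShape (Discrete ℕ)]
    [∀ n, (F ⋙ HomologicalComplex.homologyFunctor C (.up ℤ) n).PreservesEpimorphisms] :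
    IsClosedUnderLeftResolutions (P.inverseImage (F ⋙ DerivedCategory.Q)) := by
  intro Z M f g w exact_fg hM
  refine prop_of_resolution P (fun n => DerivedCategory.Q.obj (F.obj (Z n))) _ _ _ _
    (fun n => DerivedCategory.triangleOfSES_distinguished ((exact_fg n).map_of_exact F)) hM
    fun n k => ?_
  have : Epi (g n) := (exact_fg n).epi_g
  have := Functor.PreservesEpimorphisms.of_iso
    (Functor.isoWhiskerLeft F (DerivedCategory.homologyFunctorFactors C k).symm)
  exact inferInstanceAs
    (Epi ((F ⋙ DerivedCategory.Q ⋙ DerivedCategory.homologyFunctor C k).map (g n)))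

end ExactFunctor

section TensorComplex

variable {C : Type*} [Category* C] [MonoidalCategory C] [Preadditive C] [MonoidalPreadditive C]
  {ι : Type*} {c : ComplexShape ι}

/-- The functor sending an object `N` to the complex `N ⊗ A`, for a fixed complex `A`. -/
noncomputable def tensorComplex (A : HomologicalComplex C c) : C ⥤ HomologicalComplex C c where
  obj N := ((tensorLeft N).mapHomologicalComplex c).obj A
  map f := (NatTrans.mapHomologicalComplex ((curriedTensor C).map f) c).app A
  map_id N := by ext; simp
  map_comp f g := by ext; simp

variable (A : HomologicalComplex C c)

instance preservesZeroMorphisms_tensorComplex : (tensorComplex A).PreservesZeroMorphisms where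
  map_zero M N := by
    ext n : 1
    exact MonoidalPreadditive.zero_whiskerRight

instance preservesLimitsOfShape_tensorComplex (J : Type*) [Category* J] [HasLimitsOfShape J C]
    [∀ n, PreservesLimitsOfShape J (tensorRight (A.X n))] :
    PreservesLimitsOfShape J (tensorComplex A) :=
  HomologicalComplex.preservesLimitsOfShape_of_eval _ fun n =>
    inferInstanceAs (PreservesLimitsOfShape J (tensorRight (A.X n)))

instance preservesColimitsOfShape_tensorComplex (J : Type*) [Category* J] [HasColimitsOfShape J C]
    [∀ n, PreservesColimitsOfShape J (tensorRight (A.X n))] :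
    PreservesColimitsOfShape J (tensorComplex A) :=
  HomologicalComplex.preservesColimitsOfShape_of_eval _ fun n =>
    inferInstanceAs (PreservesColimitsOfShape J (tensorRight (A.X n)))

instance preservesFiniteLimits_tensorComplex [HasFiniteLimits C]
    [∀ n, PreservesFiniteLimits (tensorRight (A.X n))] :
    PreservesFiniteLimits (tensorComplex A) :=
  ⟨fun _ => inferInstance⟩

instance preservesFiniteColimits_tensorComplex [HasFiniteColimits C]
    [∀ n, PreservesFiniteColimits (tensorRight (A.X n))] :
    PreservesFiniteColimits (tensorComplex A) :=
  ⟨fun _ => inferInstance⟩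

/-- Tensoring with flat objects commutes with homology, as functors of the flat object. -/
noncomputable def tensorComplexHomologyIso [CategoryWithHomology C]
    [∀ N : C, (tensorLeft N).PreservesHomology] (n : ι) :
    tensorComplex A ⋙ HomologicalComplex.homologyFunctor C c n ≅ tensorRight (A.homology n) :=
  NatIso.ofComponents (fun N => (A.sc n).mapHomologyIso (tensorLeft N)) fun f =>
    ((Iso.eq_inv_comp _).1 (NatTrans.app_homology ((curriedTensor C).map f) (A.sc n))).symm

/-- Tensoring a complex with the unit object does not change it. -/
noncomputable def tensorComplexUnitIso : (tensorComplex A).obj (𝟙_ C) ≅ A :=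
  HomologicalComplex.Hom.isoOfComponents (fun n => λ_ (A.X n)) fun i j _ =>
    (leftUnitor_naturality (A.d i j)).symm

end TensorComplex

theorem statement17 (R : Type u) [CommRing R] [HasDerivedCategory.{w} (ModuleCat.{u} R)]
    (hreg : IsAbsolutelyFlat R) (hsa : IsSemiArtinianRing R)
    (A : DerivedCategory (ModuleCat.{u} R)) (A' : CochainComplex (ModuleCat.{u} R) ℤ)
    (e : DerivedCategory.Q.obj A' ≅ A) :
    A ∈ localizingClosure.{u} {B : DerivedCategory (ModuleCat.{u} R) |
      ∃ P : PrimeSpectrum R, B = DerivedCategory.Q.obj (tensorResidueField R P A')} := by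
  rintro L ⟨hL, hS⟩
  let P : ObjectProperty (DerivedCategory (ModuleCat.{u} R)) := (· ∈ L)
  have flat (N : ModuleCat.{u} R) : Module.Flat R N := hreg.flat N
  have : P.IsClosedUnderIsomorphisms := hL.isClosedUnderIsomorphisms
  have : P.IsTriangulated := hL.isTriangulated
  have (ι : Type u) : P.IsClosedUnderColimitsOfShape (Discrete ι) :=
    hL.isClosedUnderColimitsOfShape ι
  have : P.IsClosedUnderColimitsOfShape (Discrete ℕ) := hL.isClosedUnderColimitsOfShape ℕ
  have (n : ℤ) := Functor.PreservesEpimorphisms.of_iso (tensorComplexHomologyIso A' n).symm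
  have := isClosedUnderExtensions_inverseImage P (tensorComplex A')
  exact hL.mem_of_iso (DerivedCategory.Q.mapIso (tensorComplexUnitIso A') ≪≫ e)
    (prop_of_isSemiArtinianRing hreg hsa
      (isClosedUnderLeftResolutions_inverseImage P (tensorComplex A')) (fun p => hS ⟨p, rfl⟩)
      (𝟙_ _))
end
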